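/- Fix d ≥ 2 and let V be the maximum of the components of a Dir_k(1/(d−1))-distributed random vector, where k ∈ {d, d+1}. Then E[(1 − V)^{−1/2}] ≤ 7√2. -/

import Mathlib

open MeasureTheory ProbabilityTheory

/-- The law of the first `m` coordinates of a `Dir_{m+1}(α)`-distributed
vector: the density `Γ((m+1)α)/Γ(α)^{m+1} · (∏ y_i^{α-1}) (1-∑ y_i)^{α-1}` on
`{y : y_i > 0, ∑ y_i < 1} ⊆ ℝ^m`. -/
noncomputable def dirichletCoordLaw (m : ℕ) (α : ℝ) : Measure (Fin m → ℝ) :=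
  volume.withDensity (fun y => ENNReal.ofReal
    (if (∀ i, 0 < y i) ∧ ∑ i, y i < 1 then
      (Real.Gamma (((m : ℝ) + 1) * α) / Real.Gamma α ^ (m + 1)) *
        (∏ i, y i ^ (α - 1)) * (1 - ∑ i, y i) ^ (α - 1)
    else 0))

open scoped ENNReal

/-- **Chebyshev's association inequality** for a monotone and an antitone function. -/
lemma measure_univ_mul_lintegral_mul_le (ν : Measure ℝ) {f g : ℝ → ℝ≥0∞}
    (hf : Monotone f) (hg : Antitone g) :
    ν Set.univ * ∫⁻ t, f t * g t ∂ν ≤ (∫⁻ t, f t ∂ν) * ∫⁻ t, g t ∂ν := by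
  have hfm := hf.measurable
  have hgm := hg.measurable
  have rearrange : ∀ a b c d : ℝ≥0∞, a ≤ b → c ≤ d → a * d + b * c ≤ a * c + b * d := by
    intro a b c d hab hcd
    obtain ⟨e, rfl⟩ := exists_add_of_le hab
    obtain ⟨k, rfl⟩ := exists_add_of_le hcd
    calc a * (c + k) + (a + e) * c ≤ a * (c + k) + (a + e) * c + e * k := le_self_add
      _ = a * c + (a + e) * (c + k) := by ring
  have pointwise : ∀ s t, f s * g s + f t * g t ≤ f s * g t + f t * g s := by
    intro s t
    rcases le_total s t with h | h
    · exact rearrange _ _ _ _ (hf h) (hg h)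
    · simpa only [add_comm] using rearrange _ _ _ _ (hf h) (hg h)
  have double : ∫⁻ s, ∫⁻ t, (f s * g s + f t * g t) ∂ν ∂ν ≤
      ∫⁻ s, ∫⁻ t, (f s * g t + f t * g s) ∂ν ∂ν :=
    lintegral_mono fun s => lintegral_mono fun t => pointwise s t
  have left : ∫⁻ s, ∫⁻ t, (f s * g s + f t * g t) ∂ν ∂ν =
      2 * (ν Set.univ * ∫⁻ t, f t * g t ∂ν) := by
    have : ∀ s, ∫⁻ t, (f s * g s + f t * g t) ∂ν =
        f s * g s * ν Set.univ + ∫⁻ t, f t * g t ∂ν := by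
      intro s
      rw [lintegral_add_left measurable_const, lintegral_const]
    simp_rw [this]
    rw [lintegral_add_right _ measurable_const, lintegral_mul_const (f := fun s => f s * g s) _
      (hfm.mul hgm), lintegral_const]
    ring
  have right : ∫⁻ s, ∫⁻ t, (f s * g t + f t * g s) ∂ν ∂ν =
      2 * ((∫⁻ t, f t ∂ν) * ∫⁻ t, g t ∂ν) := by
    have : ∀ s, ∫⁻ t, (f s * g t + f t * g s) ∂ν =
        f s * (∫⁻ t, g t ∂ν) + (∫⁻ t, f t ∂ν) * g s := by
      intro s
      rw [lintegral_add_left (hgm.const_mul _), lintegral_const_mul _ hgm,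
        lintegral_mul_const _ hfm]
    simp_rw [this]
    rw [lintegral_add_left (hfm.mul_const _), lintegral_mul_const _ hfm,
      lintegral_const_mul _ hgm]
    ring
  rw [left, right] at double
  exact (ENNReal.mul_le_mul_iff_right two_ne_zero ENNReal.ofNat_ne_top).1 double

/-- The symmetric Dirichlet density in the first `n` coordinates, with normalization `C`. -/
noncomputable def dirichletWeight (C α : ℝ) {n : ℕ} (y : Fin n → ℝ) : ℝ≥0∞ :=
  ENNReal.ofReal (if (∀ i, 0 < y i) ∧ ∑ i, y i < 1 then
    C * (∏ i, y i ^ (α - 1)) * (1 - ∑ i, y i) ^ (α - 1) else 0)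

lemma measurable_dirichletWeight (C α : ℝ) (n : ℕ) :
    Measurable (dirichletWeight C α : (Fin n → ℝ) → ℝ≥0∞) := by
  unfold dirichletWeight
  refine ENNReal.measurable_ofReal.comp (Measurable.ite ?_ (by fun_prop) measurable_const)
  have hpos : MeasurableSet {y : Fin n → ℝ | ∀ i, 0 < y i} := by
    simp only [Set.ofPred_forall]
    exact MeasurableSet.iInter fun i => measurableSet_lt measurable_const (measurable_pi_apply i)
  exact hpos.inter (measurableSet_lt
    (f := fun y : Fin n → ℝ => ∑ i, y i) (by fun_prop) measurable_const)

lemma dirichletWeight_insertNth {C α : ℝ} {n : ℕ} (i : Fin (n + 1)) (t : ℝ) (w : Fin n → ℝ) :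
    dirichletWeight C α (i.insertNth t w : Fin (n + 1) → ℝ) =
      ENNReal.ofReal (if (0 < t ∧ ∀ j, 0 < w j) ∧ t + ∑ j, w j < 1 then
        C * (t ^ (α - 1) * ∏ j, w j ^ (α - 1)) * (1 - (t + ∑ j, w j)) ^ (α - 1) else 0) := by
  simp [dirichletWeight, Fin.sum_univ_succAbove _ i, Fin.prod_univ_succAbove _ i,
    Fin.forall_iff_succAbove i]

lemma dirichletWeight_insertNth_reflect {C α : ℝ} {n : ℕ} (i : Fin (n + 1)) (t : ℝ)
    (w : Fin n → ℝ) :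
    dirichletWeight C α (i.insertNth (1 - ∑ j, w j - t) w : Fin (n + 1) → ℝ) =
      dirichletWeight C α (i.insertNth t w : Fin (n + 1) → ℝ) := by
  rw [dirichletWeight_insertNth, dirichletWeight_insertNth]
  congr 1
  have e₁ : 1 - (1 - ∑ j, w j - t + ∑ j, w j) = t := by ring
  have e₂ : 1 - ∑ j, w j - t = 1 - (t + ∑ j, w j) := by ring
  rw [e₁, e₂]
  refine if_congr ?_ (by ring) rfl
  constructor
  · rintro ⟨⟨h₁, h₂⟩, h₃⟩
    exact ⟨⟨by linarith, h₂⟩, by linarith⟩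
  · rintro ⟨⟨h₁, h₂⟩, h₃⟩
    exact ⟨⟨by linarith, h₂⟩, by linarith⟩

lemma dirichletWeight_insertNth_smul {C α : ℝ} {n : ℕ} (i : Fin (n + 1)) {t : ℝ}
    (ht : t ∈ Set.Ioo (0 : ℝ) 1) (u : Fin n → ℝ) :
    dirichletWeight C α (i.insertNth t ((1 - t) • u) : Fin (n + 1) → ℝ) =
      ENNReal.ofReal (t ^ (α - 1) * (1 - t) ^ ((n + 1 : ℝ) * (α - 1))) *
        dirichletWeight C α u := by
  obtain ⟨h0, h1⟩ := ht
  have hr : 0 < 1 - t := by linarith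
  rw [dirichletWeight_insertNth, dirichletWeight, ← ENNReal.ofReal_mul (by positivity)]
  congr 1
  simp only [Pi.smul_apply, smul_eq_mul, ← Finset.mul_sum]
  have cond : ((0 < t ∧ ∀ j, 0 < (1 - t) * u j) ∧ t + (1 - t) * ∑ j, u j < 1) ↔
      (∀ j, 0 < u j) ∧ ∑ j, u j < 1 := by
    simp only [h0, true_and, mul_pos_iff_of_pos_left hr]
    refine and_congr_right fun _ => ⟨fun h => ?_, fun h => ?_⟩
    · by_contra! h'
      nlinarith
    · nlinarith
  simp only [cond]
  split_ifs with h
  · have e : 1 - (t + (1 - t) * ∑ j, u j) = (1 - t) * (1 - ∑ j, u j) := by ring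
    rw [e, Real.mul_rpow hr.le (by linarith [h.2])]
    have : ∏ j, ((1 - t) * u j) ^ (α - 1) =
        ((1 - t) ^ (α - 1)) ^ n * ∏ j, u j ^ (α - 1) := by
      simp_rw [fun j => Real.mul_rpow hr.le (h.1 j).le (z := α - 1)]
      rw [Finset.prod_mul_distrib]
      simp
    rw [this]
    have : (1 - t) ^ ((n + 1 : ℝ) * (α - 1)) = ((1 - t) ^ (α - 1)) ^ (n + 1) := by
      rw [← Real.rpow_natCast, ← Real.rpow_mul hr.le]
      congr 1
      push_cast
      ring
    rw [this]
    ring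
  · simp

lemma dirichletWeight_insertNth_of_notMem {C α : ℝ} {n : ℕ} (i : Fin (n + 1)) {t : ℝ}
    (ht : t ∉ Set.Ioo (0 : ℝ) 1) (w : Fin n → ℝ) :
    dirichletWeight C α (i.insertNth t w : Fin (n + 1) → ℝ) = 0 := by
  rw [dirichletWeight_insertNth, if_neg, ENNReal.ofReal_zero]
  rintro ⟨⟨h₁, h₂⟩, h₃⟩
  have := Finset.sum_nonneg fun j (_ : j ∈ Finset.univ) => (h₂ j).le
  exact ht ⟨h₁, by linarith⟩

lemma lintegral_eq_ofReal_pow_mul_lintegral_smul {n : ℕ} {φ : (Fin n → ℝ) → ℝ≥0∞}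
    (hφ : Measurable φ) {r : ℝ} (hr : 0 < r) :
    ∫⁻ w, φ w = ENNReal.ofReal (r ^ n) * ∫⁻ u, φ (r • u) := by
  rw [← lintegral_map hφ (measurable_const_smul r), Measure.map_addHaar_smul _ hr.ne',
    lintegral_smul_measure, smul_eq_mul, ← mul_assoc, ← ENNReal.ofReal_mul (by positivity)]
  have : r ^ n * |(r ^ Module.finrank ℝ (Fin n → ℝ))⁻¹| = 1 := by
    rw [Module.finrank_fin_fun, abs_of_pos (by positivity)]
    field_simp
  rw [this, ENNReal.ofReal_one, one_mul]

lemma lintegral_eq_lintegral_lintegral_insertNth {n : ℕ} (i : Fin (n + 1))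
    {φ : (Fin (n + 1) → ℝ) → ℝ≥0∞} (hφ : Measurable φ) :
    ∫⁻ y, φ y = ∫⁻ t : ℝ, ∫⁻ w : Fin n → ℝ, φ (i.insertNth t w) := by
  have e := (volume_preserving_piFinSuccAbove (fun _ : Fin (n + 1) => ℝ) i).symm
  rw [← e.lintegral_comp hφ, Measure.volume_eq_prod, lintegral_prod]
  · rfl
  · exact (hφ.comp e.measurable).aemeasurable

lemma lintegral_eq_lintegral_lintegral_insertNth_symm {n : ℕ} (i : Fin (n + 1))
    {φ : (Fin (n + 1) → ℝ) → ℝ≥0∞} (hφ : Measurable φ) :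
    ∫⁻ y, φ y = ∫⁻ w : Fin n → ℝ, ∫⁻ t : ℝ, φ (i.insertNth t w) := by
  have e := (volume_preserving_piFinSuccAbove (fun _ : Fin (n + 1) => ℝ) i).symm
  rw [← e.lintegral_comp hφ, Measure.volume_eq_prod, lintegral_prod_symm]
  · rfl
  · exact (hφ.comp e.measurable).aemeasurable

/-- The measure `t ^ (α - 1) dt` on `(0, 1)`. -/
noncomputable def rpowMeasure (α : ℝ) : Measure ℝ :=
  (volume.restrict (Set.Ioo (0 : ℝ) 1)).withDensity fun t => ENNReal.ofReal (t ^ (α - 1))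

lemma lintegral_rpowMeasure (α : ℝ) {f : ℝ → ℝ≥0∞} (hf : Measurable f) :
    ∫⁻ t, f t ∂rpowMeasure α =
      ∫⁻ t in Set.Ioo (0 : ℝ) 1, ENNReal.ofReal (t ^ (α - 1)) * f t := by
  rw [rpowMeasure, lintegral_withDensity_eq_lintegral_mul _ (by fun_prop) hf]
  rfl

lemma rpowMeasure_univ {α : ℝ} (hα : 0 < α) :
    rpowMeasure α Set.univ = ENNReal.ofReal (1 / α) := by
  rw [rpowMeasure, withDensity_apply _ MeasurableSet.univ, Measure.restrict_univ,
    restrict_Ioo_eq_restrict_Ioc, ← ofReal_integral_eq_lintegral_ofReal,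
    ← intervalIntegral.integral_of_le zero_le_one, integral_rpow (Or.inl (by linarith))]
  · simp [hα.ne']
  · exact (intervalIntegrable_iff_integrableOn_Ioc_of_le zero_le_one).1
      (intervalIntegral.intervalIntegrable_rpow' (by linarith))
  · filter_upwards [ae_restrict_mem measurableSet_Ioc] with t ht
    exact Real.rpow_nonneg ht.1.le _

lemma lintegral_coord_dirichletWeight (C α : ℝ) {n : ℕ} (i : Fin (n + 1)) {F : ℝ → ℝ≥0∞}
    (hF : Measurable F) :
    ∫⁻ y : Fin (n + 1) → ℝ, F (y i) * dirichletWeight C α y =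
      (∫⁻ u : Fin n → ℝ, dirichletWeight C α u) *
        ∫⁻ t, F t * ENNReal.ofReal (1 - t) ^ ((n + 1 : ℝ) * α - 1) ∂rpowMeasure α := by
  have hW := measurable_dirichletWeight C α (n + 1)
  rw [lintegral_eq_lintegral_lintegral_insertNth i (by fun_prop),
    lintegral_rpowMeasure _ (by fun_prop), ← lintegral_const_mul _ (by fun_prop),
    ← lintegral_indicator measurableSet_Ioo]
  refine lintegral_congr fun t => ?_
  have hins : Measurable fun w : Fin n → ℝ => (i.insertNth t w : Fin (n + 1) → ℝ) :=
    (MeasurableEquiv.piFinSuccAbove (fun _ => ℝ) i).symm.measurable.comp measurable_prodMk_left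
  simp only [Fin.insertNth_apply_same]
  rw [lintegral_const_mul (f := fun w => dirichletWeight C α (i.insertNth t w)) _ (hW.comp hins)]
  by_cases ht : t ∈ Set.Ioo (0 : ℝ) 1
  · have hr : 0 < 1 - t := by linarith [ht.2]
    rw [Set.indicator_of_mem ht, lintegral_eq_ofReal_pow_mul_lintegral_smul
      (φ := fun w => dirichletWeight C α (i.insertNth t w)) (hW.comp hins) hr]
    simp only [dirichletWeight_insertNth_smul i ht]
    rw [lintegral_const_mul _ (measurable_dirichletWeight C α n), ENNReal.ofReal_rpow_of_pos hr]
    have e : (1 - t) ^ ((n + 1 : ℝ) * α - 1) =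
        (1 - t) ^ n * (1 - t) ^ ((n + 1 : ℝ) * (α - 1)) := by
      rw [← Real.rpow_natCast, ← Real.rpow_add hr]
      congr 1
      ring
    rw [e, ENNReal.ofReal_mul (Real.rpow_nonneg ht.1.le _), ENNReal.ofReal_mul (pow_nonneg hr.le _)]
    ring
  · rw [Set.indicator_of_notMem ht]
    simp [dirichletWeight_insertNth_of_notMem i ht]

lemma lintegral_last_dirichletWeight (C α : ℝ) {n : ℕ} (i : Fin (n + 1)) {F : ℝ → ℝ≥0∞}
    (hF : Measurable F) :
    ∫⁻ y : Fin (n + 1) → ℝ, F (1 - ∑ j, y j) * dirichletWeight C α y =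
      ∫⁻ y : Fin (n + 1) → ℝ, F (y i) * dirichletWeight C α y := by
  have hW := measurable_dirichletWeight C α (n + 1)
  rw [lintegral_eq_lintegral_lintegral_insertNth_symm i (by fun_prop),
    lintegral_eq_lintegral_lintegral_insertNth_symm i (by fun_prop)]
  refine lintegral_congr fun w => ?_
  rw [← lintegral_sub_left_eq_self _ (1 - ∑ j, w j)]
  refine lintegral_congr fun t => ?_
  rw [dirichletWeight_insertNth_reflect]
  have e : 1 - (1 - ∑ j, w j - t + ∑ j, w j) = t := by ring
  simp [Fin.sum_univ_succAbove _ i, e]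

/-- The function `(1 - t) ^ (-1/2)` restricted to `t > 1/2`, with value `∞` for `t ≥ 1`. -/
noncomputable def upperTail (t : ℝ) : ℝ≥0∞ :=
  if 1 / 2 < t then ENNReal.ofReal (1 - t) ^ (-(1 / 2 : ℝ)) else 0

lemma monotone_upperTail : Monotone upperTail := by
  intro s t h
  unfold upperTail
  split_ifs with h₁ h₂
  · rw [ENNReal.rpow_neg, ENNReal.rpow_neg, ENNReal.inv_le_inv]
    exact ENNReal.rpow_le_rpow (ENNReal.ofReal_le_ofReal (by linarith)) (by norm_num)
  · exact absurd (h₁.trans_le h) h₂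
  · exact zero_le
  · exact le_rfl

lemma lintegral_upperTail_le {α : ℝ} (hα : 0 < α) :
    ∫⁻ t, upperTail t ∂rpowMeasure α ≤ ENNReal.ofReal (2 * Real.sqrt 2) := by
  have hint : IntervalIntegrable (fun t : ℝ => 2 * (1 - t) ^ (-(1 / 2 : ℝ))) volume (1 / 2) 1 := by
    have := (intervalIntegral.intervalIntegrable_rpow' (a := 1 / 2) (b := 0)
      (r := -(1 / 2)) (by norm_num)).comp_sub_left 1
    norm_num at this ⊢
    exact this.const_mul 2
  have hval : ∫ t in (1 / 2 : ℝ)..1, 2 * (1 - t) ^ (-(1 / 2 : ℝ)) = 2 * Real.sqrt 2 := by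
    rw [intervalIntegral.integral_const_mul,
      intervalIntegral.integral_comp_sub_left (fun t : ℝ => t ^ (-(1 / 2 : ℝ))) 1,
      integral_rpow (Or.inl (by norm_num))]
    have h : (1 / 2 : ℝ) ^ (1 / 2 : ℝ) = Real.sqrt 2 / 2 := by
      rw [← Real.sqrt_eq_rpow, Real.sqrt_div zero_le_one, Real.sqrt_one,
        div_eq_div_iff (by positivity) (by norm_num), Real.mul_self_sqrt (by norm_num), one_mul]
    norm_num at h ⊢
    rw [h]
    ring
  rw [lintegral_rpowMeasure _ monotone_upperTail.measurable, ← hval,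
    intervalIntegral.integral_of_le (by norm_num), ofReal_integral_eq_lintegral_ofReal
      ((intervalIntegrable_iff_integrableOn_Ioc_of_le (by norm_num)).1 hint),
    ← lintegral_indicator measurableSet_Ioo, ← lintegral_indicator measurableSet_Ioc]
  · refine lintegral_mono fun t => ?_
    by_cases ht : t ∈ Set.Ioo (0 : ℝ) 1
    · rw [Set.indicator_of_mem ht]
      by_cases h : 1 / 2 < t
      · have hr : 0 < 1 - t := by linarith [ht.2]
        rw [Set.indicator_of_mem (show t ∈ Set.Ioc (1 / 2 : ℝ) 1 from ⟨h, ht.2.le⟩), upperTail,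
          if_pos h, ENNReal.ofReal_rpow_of_pos hr, ← ENNReal.ofReal_mul (Real.rpow_nonneg ht.1.le _)]
        refine ENNReal.ofReal_le_ofReal (mul_le_mul_of_nonneg_right ?_ (Real.rpow_nonneg hr.le _))
        calc t ^ (α - 1) ≤ t ^ (-1 : ℝ) :=
              Real.rpow_le_rpow_of_exponent_ge ht.1 ht.2.le (by linarith)
          _ = t⁻¹ := Real.rpow_neg_one t
          _ ≤ 2 := by
              rw [inv_le_comm₀ ht.1 two_pos]
              linarith
      · simp only [upperTail, if_neg h, mul_zero]
        exact zero_le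
    · rw [Set.indicator_of_notMem ht]
      exact zero_le
  · filter_upwards [ae_restrict_mem measurableSet_Ioc] with t ht
    have : 0 ≤ 1 - t := by linarith [ht.2]
    exact mul_nonneg two_pos.le (Real.rpow_nonneg this _)

lemma lintegral_upperTail_coord_le {C α : ℝ} (hα : 0 < α) {n : ℕ} (hn : 1 ≤ (n + 1 : ℝ) * α)
    (hmass : ∫⁻ y : Fin (n + 1) → ℝ, dirichletWeight C α y = 1) (i : Fin (n + 1)) :
    ∫⁻ y : Fin (n + 1) → ℝ, upperTail (y i) * dirichletWeight C α y ≤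
      ENNReal.ofReal (α * (2 * Real.sqrt 2)) := by
  rw [lintegral_coord_dirichletWeight C α i monotone_upperTail.measurable]
  have htotal := lintegral_coord_dirichletWeight C α i (measurable_const (a := (1 : ℝ≥0∞)))
  simp only [one_mul, hmass] at htotal
  have hanti : Antitone fun t : ℝ => ENNReal.ofReal (1 - t) ^ ((n + 1 : ℝ) * α - 1) := by
    intro s t h
    exact ENNReal.rpow_le_rpow (ENNReal.ofReal_le_ofReal (by linarith)) (by linarith)
  have hcheb := measure_univ_mul_lintegral_mul_le (rpowMeasure α) monotone_upperTail hanti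
  rw [rpowMeasure_univ hα] at hcheb
  set K := ∫⁻ u : Fin n → ℝ, dirichletWeight C α u
  set I := ∫⁻ t, upperTail t * ENNReal.ofReal (1 - t) ^ ((n + 1 : ℝ) * α - 1) ∂rpowMeasure α
  set J := ∫⁻ t, ENNReal.ofReal (1 - t) ^ ((n + 1 : ℝ) * α - 1) ∂rpowMeasure α
  have hinv : ENNReal.ofReal α * ENNReal.ofReal (1 / α) = 1 := by
    rw [← ENNReal.ofReal_mul hα.le, mul_one_div_cancel hα.ne', ENNReal.ofReal_one]
  calc K * I = ENNReal.ofReal α * K * (ENNReal.ofReal (1 / α) * I) := by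
        rw [mul_mul_mul_comm, hinv, one_mul]
    _ ≤ ENNReal.ofReal α * K * ((∫⁻ t, upperTail t ∂rpowMeasure α) * J) := by gcongr
    _ = ENNReal.ofReal α * (∫⁻ t, upperTail t ∂rpowMeasure α) * (K * J) := by ring
    _ ≤ ENNReal.ofReal α * ENNReal.ofReal (2 * Real.sqrt 2) := by
        rw [← htotal, mul_one]
        gcongr
        exact lintegral_upperTail_le hα
    _ = ENNReal.ofReal (α * (2 * Real.sqrt 2)) := (ENNReal.ofReal_mul hα.le).symm

lemma ofReal_one_sub_iSup_rpow_le {m : ℕ} (x : Fin (m + 1) → ℝ) :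
    ENNReal.ofReal ((1 - iSup x) ^ (-(1 / 2 : ℝ))) ≤
      ENNReal.ofReal (Real.sqrt 2) + ∑ i, upperTail (x i) := by
  obtain ⟨i, hi⟩ := exists_eq_ciSup_of_finite (f := x)
  rw [← hi]
  by_cases h : 1 / 2 < x i
  · refine le_add_left (le_trans ?_ (Finset.single_le_sum (f := fun j => upperTail (x j))
      (fun _ _ => zero_le) (Finset.mem_univ i)))
    simp only [upperTail, if_pos h]
    rcases lt_or_ge (x i) 1 with h1 | h1
    · rw [ENNReal.ofReal_rpow_of_pos (by linarith)]
    · simp [ENNReal.ofReal_of_nonpos (show 1 - x i ≤ 0 by linarith)]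
  · refine le_add_right (ENNReal.ofReal_le_ofReal ?_)
    rw [not_lt] at h
    calc (1 - x i) ^ (-(1 / 2 : ℝ)) ≤ (1 / 2 : ℝ) ^ (-(1 / 2 : ℝ)) :=
          Real.rpow_le_rpow_of_nonpos (by norm_num) (by linarith) (by norm_num)
      _ = Real.sqrt 2 := by
          rw [one_div, Real.inv_rpow two_pos.le, Real.rpow_neg two_pos.le, inv_inv,
            Real.sqrt_eq_rpow, one_div]

lemma measurable_snoc_one_sub_sum (m : ℕ) :
    Measurable fun y : Fin m → ℝ =>
      (Fin.snoc (α := fun _ => ℝ) y (1 - ∑ i, y i) : Fin (m + 1) → ℝ) := by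
  refine measurable_pi_iff.2 fun i => ?_
  refine Fin.lastCases ?_ (fun j => ?_) i
  · simp only [Fin.snoc_last]
    fun_prop
  · simp only [Fin.snoc_castSucc]
    fun_prop

/-- If the Dirichlet density has total mass one, then `E[(1 - V)^(-1/2)]` is bounded by
`√2 (1 + 2 k α)`, where `k = n + 2` is the number of components. -/
lemma lintegral_one_sub_iSup_rpow_le {C α : ℝ} (hα : 0 < α) {n : ℕ}
    (hn : 1 ≤ (n + 1 : ℝ) * α)
    (hmass : ∫⁻ y : Fin (n + 1) → ℝ, dirichletWeight C α y = 1) :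
    ∫⁻ y : Fin (n + 1) → ℝ, ENNReal.ofReal ((1 - iSup (Fin.snoc (α := fun _ => ℝ) y
        (1 - ∑ i, y i) : Fin (n + 2) → ℝ)) ^ (-(1 / 2 : ℝ))) * dirichletWeight C α y ≤
      ENNReal.ofReal (Real.sqrt 2 + (n + 2) * (α * (2 * Real.sqrt 2))) := by
  have hW := measurable_dirichletWeight C α (n + 1)
  have hT := monotone_upperTail.measurable
  calc _ ≤ ∫⁻ y : Fin (n + 1) → ℝ, (ENNReal.ofReal (Real.sqrt 2) * dirichletWeight C α y +
        ((∑ i, upperTail (y i) * dirichletWeight C α y) +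
          upperTail (1 - ∑ i, y i) * dirichletWeight C α y)) := by
        refine lintegral_mono fun y => ?_
        refine (mul_le_mul_left (ofReal_one_sub_iSup_rpow_le _) _).trans_eq ?_
        rw [Fin.sum_univ_castSucc]
        simp only [Fin.snoc_castSucc, Fin.snoc_last]
        rw [add_mul, add_mul, Finset.sum_mul]
    _ = ENNReal.ofReal (Real.sqrt 2) +
        ((∑ i, ∫⁻ y : Fin (n + 1) → ℝ, upperTail (y i) * dirichletWeight C α y) +
          ∫⁻ y : Fin (n + 1) → ℝ, upperTail (y 0) * dirichletWeight C α y) := by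
        rw [lintegral_add_left (by fun_prop), lintegral_add_left (by fun_prop),
          lintegral_const_mul _ hW, hmass, mul_one, lintegral_finsetSum _ (by fun_prop),
          lintegral_last_dirichletWeight C α 0 hT]
    _ ≤ ENNReal.ofReal (Real.sqrt 2) +
        ((∑ _i : Fin (n + 1), ENNReal.ofReal (α * (2 * Real.sqrt 2))) +
          ENNReal.ofReal (α * (2 * Real.sqrt 2))) := by
        gcongr with i <;> exact lintegral_upperTail_coord_le hα hn hmass _
    _ = _ := by
        rw [← ENNReal.ofReal_sum_of_nonneg (fun _ _ => by positivity),
          ← ENNReal.ofReal_add (by positivity) (by positivity),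
          ← ENNReal.ofReal_add (by positivity) (by positivity)]
        congr 1
        simp
        ring

/-- Fix `d ≥ 2` and `k = m+1 ∈ {d, d+1}`. If `X` is a
`Dir_k(1/(d-1))`-distributed random vector (encoded by the density of its
first `m = k-1` coordinates, the last being `1` minus their sum) and
`V = max_i X_i`, then `E[(1-V)^{-1/2}] ≤ 7√2`. -/
theorem stmt13 (d m : ℕ) (hd : 2 ≤ d) (hk : m + 1 = d ∨ m + 1 = d + 1)
    (Ω : Type) [MeasureSpace Ω] [IsProbabilityMeasure (ℙ : Measure Ω)]
    (X : Ω → Fin (m + 1) → ℝ) (hmeas : Measurable X)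
    (hlaw : (ℙ : Measure Ω).map X =
      (dirichletCoordLaw m (1 / ((d : ℝ) - 1))).map
        (fun y : Fin m → ℝ => Fin.snoc y (1 - ∑ i, y i))) :
    ∫ ω, (1 - iSup (X ω)) ^ (-(1 / 2 : ℝ)) ∂(ℙ : Measure Ω) ≤ 7 * Real.sqrt 2 := by
  obtain ⟨n, rfl⟩ : ∃ n, m = n + 1 := ⟨m - 1, by omega⟩
  set α : ℝ := 1 / ((d : ℝ) - 1) with hαdef
  have hd' : (2 : ℝ) ≤ d := by exact_mod_cast hd
  have hα : 0 < α := by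
    rw [hαdef]
    exact one_div_pos.2 (by linarith)
  have hdα : ((d : ℝ) - 1) * α = 1 := mul_one_div_cancel (by linarith)
  have hα1 : α ≤ 1 := by nlinarith
  have hlow : (d : ℝ) - 1 ≤ n + 1 := by
    have : d ≤ n + 2 := by omega
    have : (d : ℝ) ≤ n + 2 := by exact_mod_cast this
    linarith
  have hhigh : (n + 2 : ℝ) ≤ d + 1 := by
    have : n + 2 ≤ d + 1 := by omega
    exact_mod_cast this
  have hn : 1 ≤ (n + 1 : ℝ) * α := hdα.symm.trans_le (mul_le_mul_of_nonneg_right hlow hα.le)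
  have hkα : (n + 2 : ℝ) * α ≤ 3 := by nlinarith
  set C : ℝ := Real.Gamma ((((n + 1 : ℕ) : ℝ) + 1) * α) / Real.Gamma α ^ (n + 1 + 1)
  have hlaw_eq : dirichletCoordLaw (n + 1) α = volume.withDensity (dirichletWeight C α) := rfl
  have hW := measurable_dirichletWeight C α (n + 1)
  have hsnoc := measurable_snoc_one_sub_sum (n + 1)
  have hmass : ∫⁻ y : Fin (n + 1) → ℝ, dirichletWeight C α y = 1 := by
    have h := congrArg (fun μ => μ Set.univ) hlaw
    simp only [Measure.map_apply hmeas MeasurableSet.univ,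
      Measure.map_apply hsnoc MeasurableSet.univ, Set.preimage_univ, measure_univ] at h
    rw [hlaw_eq, withDensity_apply _ MeasurableSet.univ, Measure.restrict_univ] at h
    exact h.symm
  have hG : Measurable fun x : Fin (n + 1 + 1) → ℝ =>
      ENNReal.ofReal ((1 - iSup x) ^ (-(1 / 2 : ℝ))) := by
    have : Measurable fun x : Fin (n + 1 + 1) → ℝ => ⨆ i, x i :=
      Measurable.iSup fun i => measurable_pi_apply i
    exact ENNReal.measurable_ofReal.comp ((measurable_const.sub this).pow_const _)
  have hexp : ∫⁻ ω, ENNReal.ofReal ((1 - iSup (X ω)) ^ (-(1 / 2 : ℝ))) ∂(ℙ : Measure Ω) ≤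
      ENNReal.ofReal (7 * Real.sqrt 2) := by
    rw [← lintegral_map hG hmeas, hlaw, lintegral_map hG hsnoc, hlaw_eq]
    refine (lintegral_withDensity_eq_lintegral_mul _ hW (hG.comp hsnoc)).trans_le ?_
    simp only [Pi.mul_apply, mul_comm (dirichletWeight C α _)]
    refine (lintegral_one_sub_iSup_rpow_le hα hn hmass).trans (ENNReal.ofReal_le_ofReal ?_)
    nlinarith [Real.sqrt_nonneg 2]
  calc ∫ ω, (1 - iSup (X ω)) ^ (-(1 / 2 : ℝ)) ∂(ℙ : Measure Ω)
      ≤ (∫⁻ ω, ENNReal.ofReal ((1 - iSup (X ω)) ^ (-(1 / 2 : ℝ))) ∂(ℙ : Measure Ω)).toReal := by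
        by_cases hi : Integrable (fun ω => (1 - iSup (X ω)) ^ (-(1 / 2 : ℝ))) (ℙ : Measure Ω)
        · rw [integral_eq_lintegral_pos_part_sub_lintegral_neg_part hi]
          exact sub_le_self _ ENNReal.toReal_nonneg
        · rw [integral_undef hi]
          exact ENNReal.toReal_nonneg
    _ ≤ 7 * Real.sqrt 2 := ENNReal.toReal_le_of_le_ofReal (by positivity) hexp
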